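/- Let m, λ, c_V, k₀, k₁ > 0, β ∈ [0, 2) with β ≠ 1, and set k(t) = k₀ + k₁·t^β, Q(t) = (c_V/2)·t², Λ(t) = c_V·t, G₁(t) = k₀/t − k₁·t^(β−1)/(β−1), G₂(t) = k₀/(2t²) + k₁·t^(β−2)/(2−β). Let E be a finite-dimensional real inner product space and let θ, χ : ℝ × E → ℝ be twice continuously differentiable with θ(t, x) > 0 for all (t, x). Then at every point (t, x), with Δ and ∇ acting in the space variable x and ∂ₜ the time derivative: (1/θ)·[ ∂ₜ(Q ∘ θ) + m·θ·Δχ·(χ + λ) + Δ(G₁ ∘ θ) ] = ∂ₜ(Λ ∘ θ) + m·Δ( χ²/2 + λχ ) + Δ(G₂ ∘ θ) − m·‖∇χ‖² − k(θ)·‖∇(θ⁻¹)‖². In particular, if θ, χ satisfy the heat equation ∂ₜ(Q ∘ θ) + m·θ·Δχ·(χ + λ) + Δ(G₁ ∘ θ) = 0 everywhere, then they satisfy the entropy equation ∂ₜ(Λ ∘ θ) + m·Δ(χ²/2 + λχ) + Δ(G₂ ∘ θ) = m·‖∇χ‖² + k(θ)·‖∇(θ⁻¹)‖² everywhere. -/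

import Mathlib

/-!
The identity is the chain rule `Δ(g ∘ f) = g'(f) Δf + g''(f) ‖∇f‖²` (`lap_comp`), applied three times.

For `g(s) = s²/2 + λ s` it gives `Δ(χ²/2 + λχ) = (χ + λ) Δχ + ‖∇χ‖²`. For the conductivity terms,
`G₁'(t) = -k(t)/t²` and `G₂'(t) = G₁'(t)/t` on `t > 0`, so `G₂'' = G₁''/t - G₁'/t²`. Therefore
`Δ(G₂ ∘ θ) - Δ(G₁ ∘ θ)/θ = -G₁'(θ)/θ² ‖∇θ‖² = k(θ)/θ⁴ ‖∇θ‖² = k(θ) ‖∇(θ⁻¹)‖²`, and `G₁''` itself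
never has to be computed. In time, `∂ₜ(Q ∘ θ) = θ ∂ₜ(Λ ∘ θ)`. The entropy equation is the case
where the bracket on the left vanishes.
-/

/-- The Laplacian of a real-valued function on a finite-dimensional real inner
product space: the trace of the second derivative, computed in an orthonormal basis. -/
noncomputable def lap {E : Type*} [NormedAddCommGroup E] [InnerProductSpace ℝ E]
    [FiniteDimensional ℝ E] (f : E → ℝ) (x : E) : ℝ :=
  ∑ i, fderiv ℝ (fderiv ℝ f) x (stdOrthonormalBasis ℝ E i) (stdOrthonormalBasis ℝ E i)

section

variable {E : Type*} [NormedAddCommGroup E] [InnerProductSpace ℝ E] [FiniteDimensional ℝ E]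

lemma norm_gradient_sq (f : E → ℝ) (x : E) :
    ‖gradient f x‖ ^ 2 = ∑ i, (fderiv ℝ f x (stdOrthonormalBasis ℝ E i)) ^ 2 := by
  rw [← (stdOrthonormalBasis ℝ E).sum_sq_norm_inner_right (gradient f x)]
  refine Finset.sum_congr rfl fun i _ => ?_
  rw [real_inner_comm, gradient, InnerProductSpace.toDual_symm_apply, Real.norm_eq_abs, sq_abs]

/-- Chain rule for the gradient, in squared norm. -/
lemma norm_gradient_comp_sq {f : E → ℝ} {g : ℝ → ℝ} {a : ℝ} {x : E}
    (hf : DifferentiableAt ℝ f x) (hg : HasDerivAt g a (f x)) :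
    ‖gradient (fun y => g (f y)) x‖ ^ 2 = a ^ 2 * ‖gradient f x‖ ^ 2 := by
  have h : fderiv ℝ (fun y => g (f y)) x = a • fderiv ℝ f x :=
    (hg.comp_hasFDerivAt x hf.hasFDerivAt).fderiv
  simp only [norm_gradient_sq, h, Finset.mul_sum, smul_apply, smul_eq_mul,
    mul_pow]

/-- Chain rule for the Laplacian of `g ∘ f`, with `g' = d` on the range of `f` and `g'' = D`
at `f x`. -/
lemma lap_comp {f : E → ℝ} {g d : ℝ → ℝ} {D : ℝ} {x : E} (hf : ContDiff ℝ 2 f)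
    (hg : ∀ y, HasDerivAt g (d (f y)) (f y)) (hd : HasDerivAt d D (f x)) :
    lap (fun y => g (f y)) x = d (f x) * lap f x + D * ‖gradient f x‖ ^ 2 := by
  have hdf : Differentiable ℝ f := hf.differentiable (by norm_num)
  have h1 : fderiv ℝ (fun y => g (f y)) = fun y => d (f y) • fderiv ℝ f y := by
    funext y
    exact ((hg y).comp_hasFDerivAt y (hdf y).hasFDerivAt).fderiv
  have hd2 : DifferentiableAt ℝ (fderiv ℝ f) x :=
    (hf.fderiv_right (m := 1) (by norm_num)).differentiable (by norm_num) x
  have h2 : HasFDerivAt (fun y => d (f y)) (D • fderiv ℝ f x) x :=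
    hd.comp_hasFDerivAt x (hdf x).hasFDerivAt
  have h3 := (h2.smul hd2.hasFDerivAt).fderiv
  rw [norm_gradient_sq, lap, lap, h1, Finset.mul_sum, Finset.mul_sum, ← Finset.sum_add_distrib]
  refine Finset.sum_congr rfl fun i _ => ?_
  have h4 := congrArg (fun L => L (stdOrthonormalBasis ℝ E i) (stdOrthonormalBasis ℝ E i)) h3
  refine h4.trans ?_
  simp
  ring

end

lemma hasDerivAt_G1 {k0 k1 β t : ℝ} (hβ1 : β ≠ 1) (ht : 0 < t) :
    HasDerivAt (fun t : ℝ => k0 / t - k1 * t ^ (β - 1) / (β - 1))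
      (-(k0 + k1 * t ^ β) / t ^ 2) t := by
  have hb : β - 1 ≠ 0 := sub_ne_zero.mpr hβ1
  have h1 := (hasDerivAt_inv ht.ne').const_mul k0
  have h2 := ((Real.hasDerivAt_rpow_const (p := β - 1) (Or.inl ht.ne')).const_mul k1).div_const
    (β - 1)
  have e : t ^ (β - 1 - 1) = t ^ β / t ^ 2 := by
    rw [show β - 1 - 1 = β - (2 : ℕ) by push_cast; ring, Real.rpow_sub_natCast ht.ne']
  convert! h1.sub h2 using 1
  rw [e]
  field_simp
  ring

lemma hasDerivAt_G2 {k0 k1 β t : ℝ} (hβ2 : β < 2) (ht : 0 < t) :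
    HasDerivAt (fun t : ℝ => k0 / (2 * t ^ 2) + k1 * t ^ (β - 2) / (2 - β))
      (-(k0 + k1 * t ^ β) / t ^ 2 / t) t := by
  have hb : 2 - β ≠ 0 := by linarith
  have h1 := (hasDerivAt_const t k0).div (((hasDerivAt_id t).pow 2).const_mul 2)
    (by simpa using ht.ne')
  have h2 := ((Real.hasDerivAt_rpow_const (p := β - 2) (Or.inl ht.ne')).const_mul k1).div_const
    (2 - β)
  have e : t ^ (β - 2 - 1) = t ^ β / t ^ 3 := by
    rw [show β - 2 - 1 = β - (3 : ℕ) by push_cast; ring, Real.rpow_sub_natCast ht.ne']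
  convert! h1.add h2 using 1
  rw [e]
  simp
  field_simp
  ring

theorem heat_to_entropy_equation {E : Type*} [NormedAddCommGroup E]
    [InnerProductSpace ℝ E] [FiniteDimensional ℝ E]
    (m lam cV k0 k1 β : ℝ) (hm : 0 < m) (hlam : 0 < lam) (hcV : 0 < cV)
    (hk0 : 0 < k0) (hk1 : 0 < k1)
    (hβ0 : 0 ≤ β) (hβ2 : β < 2) (hβ1 : β ≠ 1)
    (k Q Λ G1 G2 : ℝ → ℝ)
    (hk : ∀ t : ℝ, k t = k0 + k1 * t ^ β)
    (hQ : ∀ t : ℝ, Q t = cV / 2 * t ^ 2)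
    (hΛ : ∀ t : ℝ, Λ t = cV * t)
    (hG1 : ∀ t : ℝ, G1 t = k0 / t - k1 * t ^ (β - 1) / (β - 1))
    (hG2 : ∀ t : ℝ, G2 t = k0 / (2 * t ^ 2) + k1 * t ^ (β - 2) / (2 - β))
    (θ χ : ℝ × E → ℝ) (hθ : ContDiff ℝ 2 θ) (hχ : ContDiff ℝ 2 χ)
    (hpos : ∀ p : ℝ × E, 0 < θ p) :
    (∀ (t : ℝ) (x : E),
      (1 / θ (t, x)) *
        (deriv (fun s => Q (θ (s, x))) t
          + m * θ (t, x) * lap (fun y => χ (t, y)) x * (χ (t, x) + lam)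
          + lap (fun y => G1 (θ (t, y))) x)
      = deriv (fun s => Λ (θ (s, x))) t
        + m * lap (fun y => χ (t, y) ^ 2 / 2 + lam * χ (t, y)) x
        + lap (fun y => G2 (θ (t, y))) x
        - m * ‖gradient (fun y => χ (t, y)) x‖ ^ 2
        - k (θ (t, x)) * ‖gradient (fun y => (θ (t, y))⁻¹) x‖ ^ 2)
    ∧ ((∀ (t : ℝ) (x : E),
          deriv (fun s => Q (θ (s, x))) t
            + m * θ (t, x) * lap (fun y => χ (t, y)) x * (χ (t, x) + lam)
            + lap (fun y => G1 (θ (t, y))) x = 0) →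
        (∀ (t : ℝ) (x : E),
          deriv (fun s => Λ (θ (s, x))) t
            + m * lap (fun y => χ (t, y) ^ 2 / 2 + lam * χ (t, y)) x
            + lap (fun y => G2 (θ (t, y))) x
          = m * ‖gradient (fun y => χ (t, y)) x‖ ^ 2
            + k (θ (t, x)) * ‖gradient (fun y => (θ (t, y))⁻¹) x‖ ^ 2)) := by
  have hid : ∀ (t : ℝ) (x : E),
      (1 / θ (t, x)) *
        (deriv (fun s => Q (θ (s, x))) t
          + m * θ (t, x) * lap (fun y => χ (t, y)) x * (χ (t, x) + lam)
          + lap (fun y => G1 (θ (t, y))) x)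
      = deriv (fun s => Λ (θ (s, x))) t
        + m * lap (fun y => χ (t, y) ^ 2 / 2 + lam * χ (t, y)) x
        + lap (fun y => G2 (θ (t, y))) x
        - m * ‖gradient (fun y => χ (t, y)) x‖ ^ 2
        - k (θ (t, x)) * ‖gradient (fun y => (θ (t, y))⁻¹) x‖ ^ 2 := by
    intro t x
    have hθx : ContDiff ℝ 2 (fun y => θ (t, y)) := hθ.comp (contDiff_prodMk_right t)
    have hχx : ContDiff ℝ 2 (fun y => χ (t, y)) := hχ.comp (contDiff_prodMk_right t)
    have hθt : DifferentiableAt ℝ (fun s => θ (s, x)) t :=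
      (hθ.comp (contDiff_prodMk_left x)).differentiable (by norm_num) t
    have hp := hpos (t, x)
    have eQ : deriv (fun s => Q (θ (s, x))) t
        = cV * θ (t, x) * deriv (fun s => θ (s, x)) t := by
      simp only [hQ]
      rw [((hθt.hasDerivAt.fun_pow 2).const_mul (cV / 2)).deriv]
      simp
      ring
    have eΛ : deriv (fun s => Λ (θ (s, x))) t = cV * deriv (fun s => θ (s, x)) t := by
      simp only [hΛ]
      exact (hθt.hasDerivAt.const_mul cV).deriv
    have eχ : lap (fun y => χ (t, y) ^ 2 / 2 + lam * χ (t, y)) x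
        = (χ (t, x) + lam) * lap (fun y => χ (t, y)) x
          + 1 * ‖gradient (fun y => χ (t, y)) x‖ ^ 2 := by
      refine lap_comp (g := fun s => s ^ 2 / 2 + lam * s) (d := fun s => s + lam) hχx
        (fun y => ?_) ((hasDerivAt_id _).add_const lam)
      convert! (((hasDerivAt_id (χ (t, y))).pow 2).div_const 2).add
        ((hasDerivAt_id (χ (t, y))).const_mul lam) using 1
      simp
    -- `D` stands for `G₁''(θ)`; its value is irrelevant because it cancels.
    obtain ⟨D, hD⟩ : ∃ D, HasDerivAt (fun s : ℝ => -(k0 + k1 * s ^ β) / s ^ 2) D (θ (t, x)) :=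
      ⟨_, (((Real.hasDerivAt_rpow_const (p := β) (Or.inl hp.ne')).const_mul k1).const_add
        k0).fun_neg.fun_div ((hasDerivAt_id (θ (t, x))).fun_pow 2) (pow_ne_zero 2 hp.ne')⟩
    have eG1 := lap_comp (x := x) (f := fun y => θ (t, y)) hθx
      (fun y => hasDerivAt_G1 (k0 := k0) (k1 := k1) hβ1 (hpos (t, y))) hD
    have eG2 := lap_comp (x := x) (f := fun y => θ (t, y))
      (d := fun s : ℝ => -(k0 + k1 * s ^ β) / s ^ 2 / s) hθx
      (fun y => hasDerivAt_G2 (k0 := k0) (k1 := k1) hβ2 (hpos (t, y)))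
      (hD.fun_div (hasDerivAt_id (θ (t, x))) hp.ne')
    have eI := norm_gradient_comp_sq (f := fun y => θ (t, y)) (x := x)
      (hθx.differentiable (by norm_num) x) (hasDerivAt_inv hp.ne')
    rw [eQ, eΛ, eχ, eI]
    simp only [hG1, hG2, hk]
    rw [eG1, eG2]
    field_simp
    ring
  refine ⟨hid, fun h t x => ?_⟩
  have := hid t x
  rw [h t x, mul_zero] at this
  linarith
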